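/- Let p ∈ [1,∞), let d ≥ 1 be an integer, let Λ ⊂ ℝ^d be σ-compact, and let (w(x))_x be a continuous family of bounded positive weight sequences such that the map (λ, v) ↦ T_λ(v) is continuous from Λ × ℓp(ℕ)^d to ℓp(ℕ)^d, where T_λ = B_{w(λ₁)} × ⋯ × B_{w(λ_d)}. For λ ∈ Λ and an integer m ≥ 1, let S_{λ,m} act on finitely supported elements of ℓp(ℕ)^d componentwise as the weighted forward shift F_{w(λ_i)^{−1/m}}, where (F_{w(x)^{−1/m}} y)(0) = 0 and (F_{w(x)^{−1/m}} y)(n) = w_n(x)^{−1/m}·y(n−1) for n ≥ 1. Assume that for every compact K ⊂ Λ, all integers 1 ≤ m' ≤ m'', every finitely supported u ∈ ℓp(ℕ)^d, every N > 0 and every ε > 0, there exist an integer q ≥ 0, parameters λ_0, …, λ_q ∈ Λ, subsets Λ_0, …, Λ_q ⊆ Λ and integers n_0 < n_1 < ⋯ < n_q with n_0 > N and n_{i+1} − n_i > N, such that (all powers of elements of ℓp(ℕ)^d being taken coordinatewise in each component): (I) ∪_{i=0}^q Λ_i ⊇ K; (II) for all i, all λ ∈ Λ_i and all integers m with m' ≤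 m ≤ m'', ‖Σ_{j=0}^q S_{λ_j,m'}^{n_j}(u)‖ ≤ ε and ‖Σ_{j≠i} T_λ^{n_i}((S_{λ_j,m'}^{n_j}(u))^m)‖ ≤ ε; (III) for all i, all λ ∈ Λ_i and all integers m with m' < m ≤ m'', ‖T_λ^{n_i}((S_{λ_i,m'}^{n_i}(u))^m)‖ ≤ ε; (IV) for all i and all λ ∈ Λ_i, ‖T_λ^{n_i}((S_{λ_i,m'}^{n_i}(u))^{m'}) − u^{m'}‖ ≤ ε. Then there exists a non-unital subalgebra A ≠ {0} of ℓp(ℕ)^d (for the componentwise coordinatewise product) such that every nonzero element of A is hypercyclic for every T_λ, λ ∈ Λ. -/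

import Mathlib

open scoped ENNReal
open Finset

noncomputable section

/-- The space `ℓᵖ(ℕ)` of `p`-summable complex sequences. -/
abbrev lpC (p : ℝ≥0∞) : Type := lp (fun _ : ℕ => ℂ) p

/-- `T` is the product operator `B_{w(lam 0)} × ⋯ × B_{w(lam (d-1))}` of weighted backward
shifts, the weight sequence of the `i`-th factor being `(w (lam i) n)_{n ≥ 1}`. -/
def IsProductShift (p : ℝ≥0∞) [Fact (1 ≤ p)] (d : ℕ) (w : ℝ → ℕ → ℝ)
    (T : (Fin d → lpC p) →L[ℂ] (Fin d → lpC p)) (lam : Fin d → ℝ) : Prop :=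
  ∀ (v : Fin d → lpC p) (i : Fin d) (n : ℕ),
    (T v) i n = (w (lam i) (n + 1) : ℂ) * v i (n + 1)

/-- The family `T lam`, `lam ∈ S`, admits a common hypercyclic algebra for the coordinatewise
product: there is a non-unital subalgebra `A ≠ {0}` of `(ℓᵖ(ℕ))^d` (closed under addition,
scalar multiplication and the componentwise coordinatewise product) every nonzero element of
which is a common hypercyclic vector for the family. -/
def CommonHypercyclicAlgebraCW (p : ℝ≥0∞) [Fact (1 ≤ p)] (d : ℕ) (S : Set (Fin d → ℝ))
    (T : (Fin d → ℝ) → ((Fin d → lpC p) →L[ℂ] (Fin d → lpC p))) : Prop :=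
  ∃ A : Set (Fin d → lpC p),
    (0 : Fin d → lpC p) ∈ A ∧
    (∀ x ∈ A, ∀ y ∈ A, x + y ∈ A) ∧
    (∀ (c : ℂ), ∀ x ∈ A, c • x ∈ A) ∧
    (∀ x ∈ A, ∀ y ∈ A, ∃ z ∈ A, ∀ (i : Fin d) (n : ℕ), z i n = x i n * y i n) ∧
    (∃ x ∈ A, x ≠ 0) ∧
    (∀ x ∈ A, x ≠ 0 → ∀ lam ∈ S, Dense (Set.range fun n : ℕ => ((T lam) ^ (n + 1)) x))

/-- The raw weighted backward shift on sequences: `(B_w f) n = w (n+1) * f (n+1)`. -/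
def bshift (ww : ℕ → ℝ) (f : ℕ → ℂ) : ℕ → ℂ := fun n => (ww (n + 1) : ℂ) * f (n + 1)

/-- The raw weighted forward shift with weights `w n ^ (-1/m)`:
`(F f) 0 = 0` and `(F f) n = w n ^ (-1/m) * f (n-1)` for `n ≥ 1`. -/
def fshift (ww : ℕ → ℝ) (m : ℕ) (f : ℕ → ℂ) : ℕ → ℂ := fun n =>
  if n = 0 then 0 else ((ww n ^ (-(1 : ℝ) / (m : ℝ)) : ℝ) : ℂ) * f (n - 1)

/-- The (Pi sup-norm) of the element of `(ℓᵖ)^d` with coordinates `f` is at most `ε`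
(in particular `f i` is a `p`-summable sequence for each `i`). -/
def NormLE (p : ℝ≥0∞) [Fact (1 ≤ p)] (d : ℕ) (f : Fin d → ℕ → ℂ) (ε : ℝ) : Prop :=
  ∃ z : Fin d → lpC p, (∀ (i : Fin d) (n : ℕ), z i n = f i n) ∧ ‖z‖ ≤ ε

/-!
By the Baire category theorem it is enough to find, near any `x₀`, a vector whose normalised
polynomial values `x ^ m' + ∑ a_m x ^ m` are sent close to a target `v` by some iterate of `T_λ`,
uniformly in `λ` in a compact set and in the coefficients in a bounded set; both sets being
compact, the vectors with this property form an open set. Take `x + ∑ y_j` with `x` near `x₀`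
finitely supported and `y_j = S_{λ_j, m'} ^ n_j (u)`, `u ^ m' = v`. These summands have disjoint
supports, so every power of the sum is the sum of the powers. Then `T_λ ^ n_i` annihilates the
powers of `x`, sends `y_i ^ m'` near `v`, and makes all the other terms small. A nonzero element of
the algebra generated by a generic `x` is a multiple of a normalised polynomial value, its term of
lowest degree being the one that reaches the targets.
-/

section PowSucc

/-- The power `x ^ (m + 1)`. Powers are indexed from exponent `1` because the algebras considered
here have no unit. -/
def powSucc {A : Type*} [Mul A] (x : A) : ℕ → A
  | 0 => x
  | m + 1 => x * powSucc x m

theorem powSucc_mul_powSucc {A : Type*} [Semigroup A] (x : A) (m n : ℕ) :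
    powSucc x m * powSucc x n = powSucc x (m + n + 1) := by
  induction m with
  | zero => rw [zero_add]; rfl
  | succ m ih =>
    calc powSucc x (m + 1) * powSucc x n = x * (powSucc x m * powSucc x n) := mul_assoc ..
      _ = powSucc x (m + 1 + n + 1) := by rw [ih, Nat.add_right_comm m 1 n]; rfl

theorem continuous_powSucc {A : Type*} [TopologicalSpace A] [Mul A] [ContinuousMul A] (m : ℕ) :
    Continuous fun x : A => powSucc x m := by
  induction m with
  | zero => exact continuous_id
  | succ m ih => exact continuous_id.mul ih

theorem powSucc_zero_left {A : Type*} [MulZeroClass A] (m : ℕ) : powSucc (0 : A) m = 0 := by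
  cases m with
  | zero => rfl
  | succ m => exact zero_mul _

theorem mul_powSucc_eq_zero {A : Type*} [SemigroupWithZero A] {a b : A} (h : a * b = 0) (m : ℕ) :
    a * powSucc b m = 0 := by
  cases m with
  | zero => exact h
  | succ m => rw [powSucc, ← mul_assoc, h, zero_mul]

theorem powSucc_add_of_mul_eq_zero {A : Type*} [NonUnitalSemiring A] {a b : A}
    (hab : a * b = 0) (hba : b * a = 0) (m : ℕ) :
    powSucc (a + b) m = powSucc a m + powSucc b m := by
  induction m with
  | zero => rfl
  | succ m ih =>
    simp only [powSucc, ih, add_mul, mul_add, mul_powSucc_eq_zero hab, mul_powSucc_eq_zero hba,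
      add_zero, zero_add]

theorem powSucc_sum_of_pairwise_mul_eq_zero {A : Type*} [NonUnitalSemiring A] {ι : Type*}
    {y : ι → A} {s : Finset ι} (h : (s : Set ι).Pairwise fun i j => y i * y j = 0) (m : ℕ) :
    powSucc (∑ i ∈ s, y i) m = ∑ i ∈ s, powSucc (y i) m := by
  classical
  induction s using Finset.induction_on with
  | empty => exact powSucc_zero_left m
  | insert a s ha ih =>
    have hne : ∀ i ∈ s, a ≠ i := fun i hi => ne_of_mem_of_not_mem hi ha |>.symm
    have hmul : y a * ∑ i ∈ s, y i = 0 := by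
      rw [mul_sum]
      exact sum_eq_zero fun i hi => h (by simp) (by simp [hi]) (hne i hi)
    have hmul' : (∑ i ∈ s, y i) * y a = 0 := by
      rw [sum_mul]
      exact sum_eq_zero fun i hi => h (by simp [hi]) (by simp) (hne i hi).symm
    rw [sum_insert ha, sum_insert ha, powSucc_add_of_mul_eq_zero hmul hmul',
      ih (h.mono (by simp))]

end PowSucc

section NormalizedEval

/-- The value at `x` of the polynomial `X ^ (k + 1) + ∑ k < m ≤ l, a m * X ^ (m + 1)`, a polynomial
without constant term whose lowest coefficient is normalised to `1`. -/
def normalizedEval {R A : Type*} [NonUnitalNonAssocSemiring A] [SMul R A] (k l : ℕ) (a : ℕ → R)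
    (x : A) : A :=
  powSucc x k + ∑ m ∈ Ioc k l, a m • powSucc x m

theorem continuous_normalizedEval {R A : Type*} [TopologicalSpace R] [TopologicalSpace A]
    [NonUnitalNonAssocSemiring A] [IsTopologicalSemiring A] [SMul R A] [ContinuousSMul R A]
    (k l : ℕ) : Continuous fun q : (ℕ → R) × A => normalizedEval k l q.1 q.2 :=
  ((continuous_powSucc k).comp continuous_snd).add <| continuous_finsetSum _ fun m _ =>
    ((continuous_apply m).comp continuous_fst).smul ((continuous_powSucc m).comp continuous_snd)

theorem adjoin_singleton_eq_span_range_powSucc (R : Type*) {A : Type*} [CommSemiring R]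
    [NonUnitalSemiring A] [Module R A] [IsScalarTower R A A] [SMulCommClass R A A] (x : A) :
    (NonUnitalAlgebra.adjoin R {x}).toSubmodule = Submodule.span R (Set.range (powSucc x)) := by
  rw [NonUnitalAlgebra.adjoin_eq_span]
  congr 1
  ext z
  constructor
  · intro hz
    induction hz using Subsemigroup.closure_induction with
    | mem y hy => exact ⟨0, hy.symm⟩
    | mul y z _ _ hy hz =>
      obtain ⟨m, rfl⟩ := hy
      obtain ⟨n, rfl⟩ := hz
      exact ⟨_, (powSucc_mul_powSucc x m n).symm⟩
  · rintro ⟨m, rfl⟩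
    induction m with
    | zero => exact Subsemigroup.subset_closure rfl
    | succ m ih => exact mul_mem (Subsemigroup.subset_closure rfl) ih

theorem exists_eq_smul_normalizedEval {𝕜 A : Type*} [NormedField 𝕜] [NonUnitalSemiring A]
    [Module 𝕜 A] [IsScalarTower 𝕜 A A] [SMulCommClass 𝕜 A A] {x z : A}
    (hz : z ∈ NonUnitalAlgebra.adjoin 𝕜 {x}) (hz0 : z ≠ 0) :
    ∃ c : 𝕜, c ≠ 0 ∧ ∃ (k l s : ℕ) (a : ℕ → 𝕜), (∀ m, ‖a m‖ ≤ s) ∧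
      z = c • normalizedEval k l a x := by
  rw [← NonUnitalSubalgebra.mem_toSubmodule, adjoin_singleton_eq_span_range_powSucc,
    Finsupp.mem_span_range_iff_exists_finsupp] at hz
  obtain ⟨f, rfl⟩ := hz
  have hf : f.support.Nonempty := by
    rw [nonempty_iff_ne_empty, Ne, Finsupp.support_eq_empty]
    rintro rfl
    exact hz0 Finsupp.sum_zero_index
  set k := f.support.min' hf
  set l := f.support.max' hf
  have hk : f k ≠ 0 := Finsupp.mem_support_iff.1 (f.support.min'_mem hf)
  have hkl : k ≤ l := f.support.min'_le_max' hf
  obtain ⟨C, hC⟩ : ∃ C : ℝ, ∀ m, ‖(f k)⁻¹ * f m‖ ≤ C := by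
    obtain ⟨C, hC⟩ := f.finite_range.isBounded.exists_norm_le
    exact ⟨‖(f k)⁻¹‖ * C, fun m => by
      rw [norm_mul]; gcongr; exact hC _ (Set.mem_range_self m)⟩
  obtain ⟨s, hs⟩ := exists_nat_ge C
  refine ⟨f k, hk, k, l, s, fun m => (f k)⁻¹ * f m, fun m => (hC m).trans hs, ?_⟩
  have hsupp : f.support ⊆ Icc k l := fun m hm =>
    mem_Icc.2 ⟨f.support.min'_le m hm, f.support.le_max' m hm⟩
  calc f.sum (fun m c => c • powSucc x m) = ∑ m ∈ Icc k l, f m • powSucc x m :=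
        f.sum_of_support_subset hsupp _ (by simp)
    _ = f k • powSucc x k + ∑ m ∈ Ioc k l, f m • powSucc x m := by
        rw [← Ioc_insert_left hkl, sum_insert left_notMem_Ioc]
    _ = f k • normalizedEval k l (fun m => (f k)⁻¹ * f m) x := by
        simp only [normalizedEval, smul_add, smul_sum, smul_smul, mul_inv_cancel_left₀ hk]

end NormalizedEval

section Universality

open TopologicalSpace

theorem isOpen_setOf_forall_exists_mem {ι E Y F : Type*} [TopologicalSpace E] [TopologicalSpace Y]
    [CompactSpace Y] [TopologicalSpace F] {Φ : ι → E → Y → F}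
    (hΦ : ∀ n, Continuous fun q : E × Y => Φ n q.1 q.2) {U : Set F} (hU : IsOpen U) :
    IsOpen {x | ∀ y, ∃ n, Φ n x y ∈ U} := by
  rw [isOpen_iff_eventually]
  intro x hx
  have key := isCompact_univ.eventually_forall_of_forall_eventually (x₀ := x)
    (P := fun x y => ∃ n, Φ n x y ∈ U) fun y _ => by
      obtain ⟨n, hn⟩ := hx y
      filter_upwards [(hU.preimage (hΦ n)).mem_nhds hn] with q hq using ⟨n, hq⟩
  filter_upwards [key] with x' hx' y using hx' y (Set.mem_univ y)

theorem dense_setOf_forall_denseRange {ι : Type*} [Countable ι] {κ : Type*} {E F : Type*}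
    {Y : ι → Type*} [TopologicalSpace E] [BaireSpace E] [∀ i, TopologicalSpace (Y i)]
    [∀ i, CompactSpace (Y i)] [TopologicalSpace F] [SecondCountableTopology F]
    {Φ : ∀ i, κ → E → Y i → F} (hΦ : ∀ i n, Continuous fun q : E × Y i => Φ i n q.1 q.2)
    (h : ∀ i (U : Set F), IsOpen U → U.Nonempty → Dense {x | ∀ y, ∃ n, Φ i n x y ∈ U}) :
    Dense {x | ∀ i y, DenseRange fun n => Φ i n x y} := by
  have hB := isBasis_countableBasis F
  have hdense : Dense (⋂ q : ι × countableBasis F, {x | ∀ y, ∃ n, Φ q.1 n x y ∈ q.2.1}) :=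
    dense_iInter_of_isOpen
      (fun q => isOpen_setOf_forall_exists_mem (hΦ q.1) (hB.isOpen q.2.2))
      fun q => h q.1 q.2 (hB.isOpen q.2.2) (nonempty_of_mem_countableBasis q.2.2)
  refine hdense.mono fun x hx i y => hB.dense_iff.2 fun U hU _ => ?_
  obtain ⟨n, hn⟩ := Set.mem_iInter.1 hx (i, ⟨U, hU⟩) y
  exact ⟨_, hn, n, rfl⟩

end Universality

section Criterion

open NonUnitalAlgebra

/-- `x` is a hypercyclic vector for `S`: its orbit `{S ^ n x : n ≥ 1}` is dense. -/
def IsHypercyclicVector {𝕜 E : Type*} [Semiring 𝕜] [TopologicalSpace E] [AddCommMonoid E]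
    [Module 𝕜 E] (S : E →L[𝕜] E) (x : E) : Prop :=
  DenseRange fun n : ℕ => (S ^ (n + 1)) x

theorem IsHypercyclicVector.smul {𝕜 E : Type*} [DivisionRing 𝕜] [TopologicalSpace E]
    [AddCommGroup E] [Module 𝕜 E] [ContinuousConstSMul 𝕜 E] {S : E →L[𝕜] E} {x : E}
    (hx : IsHypercyclicVector S x) {c : 𝕜} (hc : c ≠ 0) : IsHypercyclicVector S (c • x) := by
  have h := (Homeomorph.smulOfNeZero c hc).surjective.denseRange.comp hx (continuous_const_smul c)
  simp only [IsHypercyclicVector, map_smul]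
  exact h

theorem continuous_pow_apply_of_continuousOn {𝕜 E X : Type*} [Semiring 𝕜] [TopologicalSpace E]
    [AddCommMonoid E] [Module 𝕜 E] [TopologicalSpace X] {T : X → E →L[𝕜] E} {K : Set X}
    (hT : ContinuousOn (fun q : X × E => T q.1 q.2) (K ×ˢ Set.univ)) (n : ℕ) :
    Continuous fun q : K × E => (T q.1 ^ n) q.2 := by
  induction n with
  | zero => exact continuous_snd
  | succ n ih =>
    have hT' : Continuous fun q : K × E => T q.1 q.2 :=
      hT.comp_continuous (f := fun q : K × E => ((q.1 : X), q.2)) (by fun_prop)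
        fun q => ⟨q.1.2, trivial⟩
    simp only [pow_succ]
    exact ih.comp (continuous_fst.prodMk hT')

variable {𝕜 A X : Type*} [NormedField 𝕜] [NonUnitalNormedRing A] [NormedSpace 𝕜 A]

theorem dist_map_normalizedEval_lt {S : A →L[𝕜] A} {k l : ℕ} {a : ℕ → 𝕜} {x v : A} {s ε : ℝ}
    (ha : ∀ m, ‖a m‖ ≤ s) (hk : dist (S (powSucc x k)) v < ε)
    (hm : ∀ m ∈ Ioc k l, ‖S (powSucc x m)‖ < ε) :
    dist (S (normalizedEval k l a x)) v < (1 + #(Ioc k l) * s) * ε := by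
  have hs : 0 ≤ s := (norm_nonneg _).trans (ha 0)
  have htail : ‖∑ m ∈ Ioc k l, a m • S (powSucc x m)‖ ≤ #(Ioc k l) * s * ε := by
    refine (norm_sum_le_of_le _ fun m hm' => ?_).trans_eq
      (by rw [sum_const, nsmul_eq_mul, mul_assoc])
    rw [norm_smul]
    exact mul_le_mul (ha m) (hm m hm').le (norm_nonneg _) hs
  calc dist (S (normalizedEval k l a x)) v
      = ‖(S (powSucc x k) - v) + ∑ m ∈ Ioc k l, a m • S (powSucc x m)‖ := by
        simp only [normalizedEval, map_add, map_sum, map_smul, dist_eq_norm]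
        congr 1
        abel
    _ ≤ dist (S (powSucc x k)) v + ‖∑ m ∈ Ioc k l, a m • S (powSucc x m)‖ := by
        rw [dist_eq_norm]
        exact norm_add_le _ _
    _ < (1 + #(Ioc k l) * s) * ε := by linarith

/-- Near every `x` there is `y` such that, for every `lam ∈ K`, some iterate of `T lam` sends the
power `y ^ (k + 1)` close to `v` and the powers `y ^ (m + 1)`, `k < m ≤ l`, close to `0`. This is
the topological transitivity condition behind common hypercyclic algebras. -/
def PowerTransitiveOn (T : X → A →L[𝕜] A) (K : Set X) : Prop :=
  ∀ (k l : ℕ) (x v : A) (ε : ℝ), 0 < ε → ∃ y, dist y x < ε ∧ ∀ lam ∈ K, ∃ n : ℕ,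
    dist ((T lam ^ (n + 1)) (powSucc y k)) v < ε ∧
      ∀ m ∈ Ioc k l, ‖(T lam ^ (n + 1)) (powSucc y m)‖ < ε

theorem PowerTransitiveOn.dense_setOf_exists_mem {T : X → A →L[𝕜] A} {K : Set X}
    (h : PowerTransitiveOn T K) (k l s : ℕ) {U : Set A} (hU : IsOpen U) (hU' : U.Nonempty) :
    Dense {x | ∀ lam ∈ K, ∀ a : ℕ → 𝕜, (∀ m, ‖a m‖ ≤ s) →
      ∃ n : ℕ, (T lam ^ (n + 1)) (normalizedEval k l a x) ∈ U} := by
  obtain ⟨v, hv⟩ := hU'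
  obtain ⟨ε, hε, hεU⟩ := Metric.isOpen_iff.1 hU v hv
  refine Metric.dense_iff.2 fun x r hr => ?_
  set C : ℝ := 1 + #(Ioc k l) * s
  have hC : 0 < C := by positivity
  obtain ⟨y, hyx, hy⟩ := h k l x v (min r (ε / C)) (by positivity)
  refine ⟨y, hyx.trans_le (min_le_left _ _), fun lam hlam a ha => ?_⟩
  obtain ⟨n, hk, hm⟩ := hy lam hlam
  refine ⟨n, hεU ?_⟩
  calc dist ((T lam ^ (n + 1)) (normalizedEval k l a y)) v < C * min r (ε / C) :=
        dist_map_normalizedEval_lt ha hk hm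
    _ ≤ C * (ε / C) := by gcongr; exact min_le_right _ _
    _ = ε := mul_div_cancel₀ ε hC.ne'

theorem dense_setOf_forall_adjoin_isHypercyclicVector [ProperSpace 𝕜] [IsScalarTower 𝕜 A A]
    [SMulCommClass 𝕜 A A] [CompleteSpace A] [TopologicalSpace.SeparableSpace A]
    [TopologicalSpace X] {T : X → A →L[𝕜] A} {Λ : Set X} (hΛ : IsSigmaCompact Λ)
    (hT : ContinuousOn (fun q : X × A => T q.1 q.2) (Λ ×ˢ Set.univ))
    (h : ∀ K ⊆ Λ, IsCompact K → PowerTransitiveOn T K) :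
    Dense {x | ∀ z ∈ adjoin 𝕜 {x}, z ≠ 0 → ∀ lam ∈ Λ, IsHypercyclicVector (T lam) z} := by
  obtain ⟨K, hK, rfl⟩ := hΛ
  have hKΛ (c : ℕ) : K c ⊆ ⋃ c, K c := Set.subset_iUnion K c
  have (c : ℕ) : CompactSpace (K c) := isCompact_iff_compactSpace.1 (hK c)
  have := UniformSpace.secondCountable_of_separable A
  let Φ (i : ℕ × ℕ × ℕ × ℕ) (n : ℕ) (x : A)
      (y : K i.1 × (ℕ → Metric.closedBall (0 : 𝕜) i.2.2.2)) : A :=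
    (T y.1 ^ (n + 1)) (normalizedEval i.2.1 i.2.2.1 (fun m => (y.2 m : 𝕜)) x)
  have hΦ : ∀ i n, Continuous fun q : A × _ => Φ i n q.1 q.2 := fun i n =>
    (continuous_pow_apply_of_continuousOn
      (hT.mono (Set.prod_mono_left (hKΛ i.1))) (n + 1)).comp <|
      (continuous_fst.comp continuous_snd).prodMk <|
        (continuous_normalizedEval i.2.1 i.2.2.1).comp <|
          (by fun_prop : Continuous fun q : A × (K i.1 ×
            (ℕ → Metric.closedBall (0 : 𝕜) i.2.2.2)) => ((fun m => (q.2.2 m : 𝕜)), q.1))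
  refine (dense_setOf_forall_denseRange hΦ fun i U hU hU' => ?_).mono fun x hx z hz hz0 => ?_
  · refine ((h _ (hKΛ i.1) (hK i.1)).dense_setOf_exists_mem i.2.1 i.2.2.1 i.2.2.2 hU hU').mono ?_
    exact fun x hx y => hx y.1 y.1.2 _ fun m => mem_closedBall_zero_iff.1 (y.2 m).2
  · intro lam hlam
    obtain ⟨c, hc⟩ := Set.mem_iUnion.1 hlam
    obtain ⟨b, hb, k, l, s, a, ha, rfl⟩ := exists_eq_smul_normalizedEval hz hz0
    exact IsHypercyclicVector.smul (hx (c, k, l, s)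
      (⟨lam, hc⟩, fun m => ⟨a m, mem_closedBall_zero_iff.2 (ha m)⟩)) hb

/-- The data of the Basic Criterion for common hypercyclic algebras, in a normed algebra. The
blocks `y j`, `j ∈ s`, are orthogonal to `x` and to each other, their sum is small, and for every
`lam ∈ K` some iterate of `T lam` annihilates the powers of `x`, sends `(y i) ^ (k + 1)` close to
`v` for one index `i`, and makes everything else small in all powers `m + 1` with `k ≤ m ≤ l`. -/
structure IsBlockFamily {ι : Type*} [DecidableEq ι] (T : X → A →L[𝕜] A) (K : Set X) (k l : ℕ)
    (x v : A) (ε : ℝ) (s : Finset ι) (y : ι → A) : Prop where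
  pairwise_mul_eq_zero : (s : Set ι).Pairwise fun i j => y i * y j = 0
  left_mul_eq_zero : ∀ j ∈ s, x * y j = 0
  mul_left_eq_zero : ∀ j ∈ s, y j * x = 0
  norm_sum_le : ‖∑ j ∈ s, y j‖ ≤ ε
  exists_iterate : ∀ lam ∈ K, ∃ i ∈ s, ∃ n : ℕ,
    (∀ m, (T lam ^ (n + 1)) (powSucc x m) = 0) ∧
    (∀ m ∈ Icc k l, ‖∑ j ∈ s.erase i, (T lam ^ (n + 1)) (powSucc (y j) m)‖ ≤ ε) ∧
    (∀ m ∈ Ioc k l, ‖(T lam ^ (n + 1)) (powSucc (y i) m)‖ ≤ ε) ∧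
    ‖(T lam ^ (n + 1)) (powSucc (y i) k) - v‖ ≤ ε

theorem IsBlockFamily.powSucc_add_sum {ι : Type*} [DecidableEq ι] {T : X → A →L[𝕜] A}
    {K : Set X} {k l : ℕ} {x v : A} {ε : ℝ} {s : Finset ι} {y : ι → A}
    (h : IsBlockFamily T K k l x v ε s y) (m : ℕ) :
    powSucc (x + ∑ j ∈ s, y j) m = powSucc x m + ∑ j ∈ s, powSucc (y j) m := by
  rw [powSucc_add_of_mul_eq_zero, powSucc_sum_of_pairwise_mul_eq_zero h.pairwise_mul_eq_zero]
  · rw [mul_sum, sum_eq_zero h.left_mul_eq_zero]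
  · rw [sum_mul, sum_eq_zero h.mul_left_eq_zero]

theorem IsBlockFamily.exists_map_powSucc_near {ι : Type*} [DecidableEq ι] {T : X → A →L[𝕜] A}
    {K : Set X} {k l : ℕ} {x v : A} {ε : ℝ} {s : Finset ι} {y : ι → A}
    (h : IsBlockFamily T K k l x v ε s y) (hkl : k ≤ l) {lam : X} (hlam : lam ∈ K) :
    ∃ n : ℕ, dist ((T lam ^ (n + 1)) (powSucc (x + ∑ j ∈ s, y j) k)) v ≤ 2 * ε ∧
      ∀ m ∈ Ioc k l, ‖(T lam ^ (n + 1)) (powSucc (x + ∑ j ∈ s, y j) m)‖ ≤ 2 * ε := by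
  obtain ⟨i, hi, n, hx, herase, hm, hk⟩ := h.exists_iterate lam hlam
  have hsplit (m : ℕ) : (T lam ^ (n + 1)) (powSucc (x + ∑ j ∈ s, y j) m) =
      ∑ j ∈ s.erase i, (T lam ^ (n + 1)) (powSucc (y j) m) +
        (T lam ^ (n + 1)) (powSucc (y i) m) := by
    rw [h.powSucc_add_sum, map_add, hx, zero_add, map_sum, sum_erase_add _ _ hi]
  refine ⟨n, ?_, fun m hm' => ?_⟩
  · rw [hsplit, dist_eq_norm, add_sub_assoc, two_mul]
    exact norm_add_le_of_le (herase k (left_mem_Icc.2 hkl)) hk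
  · rw [hsplit, two_mul]
    exact norm_add_le_of_le (herase m (Ioc_subset_Icc_self hm')) (hm m hm')

theorem powerTransitiveOn_of_isBlockFamily {ι : Type*} [DecidableEq ι] {T : X → A →L[𝕜] A}
    {K : Set X} {D : Set A} (hD : Dense D)
    (h : ∀ k l, k ≤ l → ∀ x ∈ D, ∀ v ∈ D, ∀ ε > 0,
      ∃ (s : Finset ι) (y : ι → A), IsBlockFamily T K k l x v ε s y) :
    PowerTransitiveOn T K := by
  intro k l x₀ v₀ ε hε
  obtain ⟨x, hxD, hx⟩ := hD.exists_dist_lt x₀ (half_pos hε)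
  obtain ⟨v, hvD, hv⟩ := hD.exists_dist_lt v₀ (half_pos hε)
  obtain ⟨s, y, hsy⟩ := h k (max k l) (le_max_left k l) x hxD v hvD (ε / 4) (by positivity)
  refine ⟨x + ∑ j ∈ s, y j, ?_, fun lam hlam => ?_⟩
  · have hsum : dist (x + ∑ j ∈ s, y j) x ≤ ε / 4 := by
      simpa only [dist_self_add_left] using hsy.norm_sum_le
    linarith [dist_triangle_right (x + ∑ j ∈ s, y j) x₀ x]
  · obtain ⟨n, hk, hm⟩ := hsy.exists_map_powSucc_near (le_max_left k l) hlam
    refine ⟨n, ?_, fun m hm' => ?_⟩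
    · linarith [dist_triangle_right ((T lam ^ (n + 1)) (powSucc (x + ∑ j ∈ s, y j) k)) v₀ v]
    · linarith [hm m (Ioc_subset_Ioc_right (le_max_right k l) hm')]

theorem exists_nonUnitalSubalgebra_isHypercyclicVector [ProperSpace 𝕜] [IsScalarTower 𝕜 A A]
    [SMulCommClass 𝕜 A A] [CompleteSpace A] [TopologicalSpace.SeparableSpace A] [Nontrivial A]
    [TopologicalSpace X] {T : X → A →L[𝕜] A} {Λ : Set X} (hΛ : IsSigmaCompact Λ)
    (hT : ContinuousOn (fun q : X × A => T q.1 q.2) (Λ ×ˢ Set.univ))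
    {D : Set A} (hD : Dense D) {ι : Type*} [DecidableEq ι]
    (h : ∀ K ⊆ Λ, IsCompact K → ∀ k l, k ≤ l → ∀ x ∈ D, ∀ v ∈ D, ∀ ε > 0,
      ∃ (s : Finset ι) (y : ι → A), IsBlockFamily T K k l x v ε s y) :
    ∃ B : NonUnitalSubalgebra 𝕜 A, (∃ x ∈ B, x ≠ 0) ∧
      ∀ z ∈ B, z ≠ 0 → ∀ lam ∈ Λ, IsHypercyclicVector (T lam) z := by
  have hdense := dense_setOf_forall_adjoin_isHypercyclicVector hΛ hT fun K hKΛ hK =>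
    powerTransitiveOn_of_isBlockFamily hD (h K hKΛ hK)
  obtain ⟨x, hx, hx0⟩ := hdense.exists_mem_open isOpen_compl_singleton (exists_ne (0 : A))
  exact ⟨adjoin 𝕜 {x}, ⟨x, subset_adjoin 𝕜 rfl, hx0⟩, hx⟩

end Criterion

section LpSpace

open Filter TopologicalSpace

theorem memℓp_of_eventually_eq_zero {E : ℕ → Type*} [∀ n, NormedAddCommGroup (E n)]
    {p : ℝ≥0∞} {f : ∀ n, E n} (hf : ∀ᶠ n in atTop, f n = 0) : Memℓp f p := by
  refine (memℓp_zero ?_).of_exponent_ge zero_le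
  rwa [← Nat.cofinite_eq_atTop, eventually_cofinite] at hf

variable {α : Type*} {p : ℝ≥0∞} [Fact (1 ≤ p)]

theorem separableSpace_lp [Countable α] {E : α → Type*} [∀ i, NormedAddCommGroup (E i)]
    [∀ i, SeparableSpace (E i)] (hp : p ≠ ⊤) : SeparableSpace (lp E p) := by
  classical
  let partialSum (s : Finset α) (x : ∀ i, E i) : lp E p := ∑ i ∈ s, lp.single p i (x i)
  have hcont (s : Finset α) : Continuous (partialSum s) :=
    continuous_finsetSum s fun i _ => (lp.isometry_single i).continuous.comp (continuous_apply i)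
  have hsep : IsSeparable (⋃ s, Set.range (partialSum s)) :=
    IsSeparable.iUnion fun s => isSeparable_range (hcont s)
  refine isSeparable_univ_iff.1 (hsep.closure.mono fun x _ => ?_)
  exact mem_closure_of_tendsto (lp.hasSum_single hp x)
    (Eventually.of_forall fun s => Set.mem_iUnion.2 ⟨s, x, rfl⟩)

theorem nontrivial_lp {E : α → Type*} [∀ i, NormedAddCommGroup (E i)] (i : α)
    [Nontrivial (E i)] : Nontrivial (lp E p) := by
  classical
  exact (lp.isometry_single i).injective.nontrivial

theorem dense_setOf_eventually_eq_zero {ι : Type*} {E : ℕ → Type*}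
    [∀ n, NormedAddCommGroup (E n)] (hp : p ≠ ⊤) :
    Dense {x : ι → lp E p | ∀ᶠ n in atTop, ∀ i, x i n = 0} := fun x => by
  refine mem_closure_of_tendsto
    (tendsto_pi_nhds.2 fun i => (lp.hasSum_single hp (x i)).tendsto_sum_nat)
    (Eventually.of_forall fun N => ?_)
  filter_upwards [eventually_ge_atTop N] with n hn i
  rw [lp.coeFn_sum, Finset.sum_apply]
  refine sum_eq_zero fun m hm => ?_
  exact lp.single_apply_ne p m _ (by have := mem_range.1 hm; omega)

variable {B : α → Type*} [∀ i, NonUnitalNormedRing (B i)]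

theorem norm_mul_apply_le_norm_smul_toNorm (f g : lp B p) (i : α) :
    ‖f i * g i‖ ≤ ‖(‖f‖ • lp.toNorm g) i‖ := by
  have hf : ‖f i‖ ≤ ‖f‖ := lp.norm_apply_le_norm (zero_lt_one.trans_le Fact.out).ne' f i
  calc ‖f i * g i‖ ≤ ‖f i‖ * ‖g i‖ := norm_mul_le _ _
    _ ≤ ‖f‖ * ‖g i‖ := by gcongr
    _ = ‖(‖f‖ • lp.toNorm g) i‖ := by
      rw [lp.coeFn_smul, Pi.smul_apply, norm_smul, norm_norm]
      simp only [lp.toNorm, norm_norm]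

/-- The coordinatewise product on `lp B p`, `1 ≤ p`, from which `lpNonUnitalNormedRing` is built.
Like the latter it is not a global instance. -/
@[reducible]
def lpMul : Mul (lp B p) where
  mul f g := ⟨fun i => f i * g i,
    (lp.memℓp (‖f‖ • lp.toNorm g)).mono' (norm_mul_apply_le_norm_smul_toNorm f g)⟩

attribute [local instance] lpMul

/-- `lp B p` with the coordinatewise product, as a normed ring without unit. It is only used as a
local instance: at `p = ∞` it would compete with the ring structure of Mathlib on `lp B ∞`. -/
@[reducible]
def lpNonUnitalNormedRing : NonUnitalNormedRing (lp B p) :=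
  { Function.Injective.nonUnitalRing (fun f : lp B p => (f : ∀ i, B i)) Subtype.coe_injective
      (lp.coeFn_zero B p) lp.coeFn_add (fun _ _ => rfl) lp.coeFn_neg lp.coeFn_sub
      (fun _ _ => rfl) (fun _ _ => rfl), lp.normedAddCommGroup with
    norm_mul_le f g := calc
      ‖f * g‖ ≤ ‖‖f‖ • lp.toNorm g‖ :=
        lp.norm_mono (zero_lt_one.trans_le Fact.out).ne' (norm_mul_apply_le_norm_smul_toNorm f g)
      _ = ‖f‖ * ‖g‖ := by rw [norm_smul, norm_norm, lp.norm_toNorm] }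

end LpSpace

section Shifts

theorem bshift_iterate_eq_zero {ww : ℕ → ℝ} {n : ℕ} {f : ℕ → ℂ} (hf : ∀ t, n ≤ t → f t = 0) :
    (bshift ww)^[n] f = 0 := by
  induction n generalizing f with
  | zero => exact funext fun t => hf t t.zero_le
  | succ n ih =>
    rw [Function.iterate_succ_apply]
    exact ih fun t ht => by rw [bshift, hf (t + 1) (by omega), mul_zero]

theorem fshift_iterate_eq_zero {ww : ℕ → ℝ} {m n N : ℕ} {f : ℕ → ℂ}
    (hf : ∀ t, N ≤ t → f t = 0) {t : ℕ} (ht : t < n ∨ n + N ≤ t) :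
    (fshift ww m)^[n] f t = 0 := by
  induction n generalizing t with
  | zero => exact hf t (by omega)
  | succ n ih =>
    rw [Function.iterate_succ_apply', fshift]
    split_ifs with h
    · rfl
    · rw [ih (by omega), mul_zero]

theorem memℓp_fshift_iterate {p : ℝ≥0∞} {ww : ℕ → ℝ} {m n N : ℕ} {f : ℕ → ℂ}
    (hf : ∀ t, N ≤ t → f t = 0) : Memℓp ((fshift ww m)^[n] f) p :=
  memℓp_of_eventually_eq_zero <| Filter.eventually_atTop.2
    ⟨n + N, fun _ ht => fshift_iterate_eq_zero hf (.inr ht)⟩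

theorem add_lt_of_forall_add_lt_succ {q N : ℕ} {f : ℕ → ℕ} (hf : ∀ j < q, f j + N < f (j + 1))
    {j k : ℕ} (hjk : j < k) (hk : k ≤ q) : f j + N < f k := by
  induction k, hjk using Nat.le_induction with
  | base => exact hf j hk
  | succ k _ ih => exact (ih (by omega)).trans ((Nat.le_add_right _ N).trans_lt (hf k hk))

theorem lt_of_forall_add_lt_succ {q N : ℕ} {f : ℕ → ℕ} (hf₀ : N < f 0)
    (hf : ∀ j < q, f j + N < f (j + 1)) {j : ℕ} (hj : j ≤ q) : N < f j := by
  rcases j.eq_zero_or_pos with rfl | hj0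
  · exact hf₀
  · exact (Nat.le_add_left N (f 0)).trans_lt (add_lt_of_forall_add_lt_succ hf hj0 hj)

variable {p : ℝ≥0∞} [Fact (1 ≤ p)] {d : ℕ}

theorem IsProductShift.pow_apply {w : ℝ → ℕ → ℝ} {S : (Fin d → lpC p) →L[ℂ] (Fin d → lpC p)}
    {lam : Fin d → ℝ} (hS : IsProductShift p d w S lam) (n : ℕ) (v : Fin d → lpC p) (i : Fin d) :
    ((S ^ n) v i : ℕ → ℂ) = (bshift (w (lam i)))^[n] (v i) := by
  induction n generalizing v with
  | zero => rfl
  | succ n ih =>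
    have hSv : (S v i : ℕ → ℂ) = bshift (w (lam i)) (v i) := funext (hS v i)
    calc ((S ^ (n + 1)) v i : ℕ → ℂ) = (S ^ n) (S v) i := by rw [pow_succ]; rfl
      _ = (bshift (w (lam i)))^[n + 1] (v i) := by rw [ih, hSv, Function.iterate_succ_apply]

theorem NormLE.norm_le {f : Fin d → ℕ → ℂ} {ε : ℝ} (hf : NormLE p d f ε) {x : Fin d → lpC p}
    (hx : ∀ i n, x i n = f i n) : ‖x‖ ≤ ε := by
  obtain ⟨z, hz, hzε⟩ := hf
  rwa [show x = z by ext i n; rw [hx, hz]]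

end Shifts

section LpAlgebra

attribute [local instance] lpNonUnitalNormedRing

variable {α : Type*} {p : ℝ≥0∞} [Fact (1 ≤ p)]

theorem lp_isScalarTower {𝕜 : Type*} [NormedRing 𝕜] {B : α → Type*}
    [∀ i, NonUnitalNormedRing (B i)] [∀ i, Module 𝕜 (B i)] [∀ i, IsBoundedSMul 𝕜 (B i)]
    [∀ i, IsScalarTower 𝕜 (B i) (B i)] : IsScalarTower 𝕜 (lp B p) (lp B p) :=
  ⟨fun c f g => lp.ext <| smul_assoc (N := ∀ i, B i) (α := ∀ i, B i) c (⇑f) (⇑g)⟩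

theorem lp_smulCommClass {𝕜 : Type*} [NormedRing 𝕜] {B : α → Type*}
    [∀ i, NonUnitalNormedRing (B i)] [∀ i, Module 𝕜 (B i)] [∀ i, IsBoundedSMul 𝕜 (B i)]
    [∀ i, SMulCommClass 𝕜 (B i) (B i)] : SMulCommClass 𝕜 (lp B p) (lp B p) :=
  ⟨fun c f g => lp.ext <| smul_comm (N := ∀ i, B i) (α := ∀ i, B i) c (⇑f) (⇑g)⟩

attribute [local instance] lp_isScalarTower lp_smulCommClass

theorem powSucc_lp_apply {ι : Type*} {B : α → Type*} [∀ i, NormedRing (B i)] (x : ι → lp B p)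
    (m : ℕ) (i : ι) (n : α) : powSucc x m i n = x i n ^ (m + 1) := by
  induction m with
  | zero => rw [zero_add, pow_one]; rfl
  | succ m ih => rw [pow_succ', ← ih]; rfl

theorem lp_mul_eq_zero {ι : Type*} {B : α → Type*} [∀ i, NonUnitalNormedRing (B i)]
    {x y : ι → lp B p} (h : ∀ i n, x i n = 0 ∨ y i n = 0) : x * y = 0 := by
  ext i n
  exact (h i n).elim (fun hx => mul_eq_zero_of_left hx _) fun hy => mul_eq_zero_of_right _ hy

variable {d : ℕ} {T : (Fin d → ℝ) → (Fin d → lpC p) →L[ℂ] (Fin d → lpC p)}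

theorem commonHypercyclicAlgebraCW_of_isBlockFamily (hp : p ≠ ⊤) (hd : 1 ≤ d)
    {Λ : Set (Fin d → ℝ)} (hΛ : IsSigmaCompact Λ)
    (hT : ContinuousOn (fun q : (Fin d → ℝ) × (Fin d → lpC p) => T q.1 q.2) (Λ ×ˢ Set.univ))
    {D : Set (Fin d → lpC p)} (hD : Dense D)
    (h : ∀ K ⊆ Λ, IsCompact K → ∀ k l, k ≤ l → ∀ x ∈ D, ∀ v ∈ D, ∀ ε > 0,
      ∃ (s : Finset ℕ) (y : ℕ → Fin d → lpC p), IsBlockFamily T K k l x v ε s y) :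
    CommonHypercyclicAlgebraCW p d Λ T := by
  have : Nonempty (Fin d) := ⟨⟨0, hd⟩⟩
  have : Nontrivial (lpC p) := nontrivial_lp 0
  have : TopologicalSpace.SeparableSpace (lpC p) := separableSpace_lp hp
  obtain ⟨B, hB, hhyp⟩ := exists_nonUnitalSubalgebra_isHypercyclicVector hΛ hT hD h
  exact ⟨B, B.zero_mem, fun _ hx _ hy => B.add_mem hx hy, fun c _ hx => B.smul_mem c hx,
    fun x hx y hy => ⟨x * y, B.mul_mem hx hy, fun _ _ => rfl⟩, hB, hhyp⟩

section Blocks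

theorem IsProductShift.pow_powSucc_apply {w : ℝ → ℕ → ℝ}
    {S : (Fin d → lpC p) →L[ℂ] (Fin d → lpC p)} {lam : Fin d → ℝ} (hS : IsProductShift p d w S lam)
    (n : ℕ) (z : Fin d → lpC p) (m : ℕ) (i : Fin d) :
    ((S ^ n) (powSucc z m) i : ℕ → ℂ) =
      (bshift (w (lam i)))^[n] fun t => z i t ^ (m + 1) := by
  rw [hS.pow_apply]
  exact congrArg _ (funext fun t => powSucc_lp_apply z m i t)

theorem IsProductShift.pow_powSucc_eq_zero {w : ℝ → ℕ → ℝ}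
    {S : (Fin d → lpC p) →L[ℂ] (Fin d → lpC p)} {lam : Fin d → ℝ} (hS : IsProductShift p d w S lam)
    {n : ℕ} {x : Fin d → lpC p} (hx : ∀ i t, n ≤ t → x i t = 0) (m : ℕ) :
    (S ^ n) (powSucc x m) = 0 := by
  refine funext fun i => lp.ext ?_
  rw [hS.pow_powSucc_apply]
  exact bshift_iterate_eq_zero fun t ht => by rw [hx i t ht, zero_pow m.succ_ne_zero]

variable {w : ℝ → ℕ → ℝ} {K : Set (Fin d → ℝ)} {k l q N : ℕ} {u : Fin d → ℕ → ℂ}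
  {lamj : ℕ → Fin d → ℝ} {nseq : ℕ → ℕ} {y : ℕ → Fin d → lpC p}

theorem pairwise_mul_eq_zero_of_fshift (hu : ∀ i n, N ≤ n → u i n = 0)
    (hgap : ∀ j < q, nseq j + N < nseq (j + 1))
    (hy : ∀ j i n, y j i n = (fshift (w (lamj j i)) (k + 1))^[nseq j] (u i) n) :
    (range (q + 1) : Set ℕ).Pairwise fun i j => y i * y j = 0 := by
  intro i hi j hj hij
  rw [coe_range, Set.mem_Iio] at hi hj
  refine lp_mul_eq_zero fun c n => ?_
  have hvanish (j : ℕ) (hn : n < nseq j ∨ nseq j + N ≤ n) : y j c n = 0 :=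
    (hy j c n).trans (fshift_iterate_eq_zero (hu c) hn)
  have hsep : nseq i + N < nseq j ∨ nseq j + N < nseq i := by
    rcases hij.lt_or_gt with h | h
    · exact .inl (add_lt_of_forall_add_lt_succ hgap h (by omega))
    · exact .inr (add_lt_of_forall_add_lt_succ hgap h (by omega))
  by_cases hn : n < nseq i ∨ nseq i + N ≤ n
  · exact .inl (hvanish i hn)
  · exact .inr (hvanish j (by omega))

theorem isBlockFamily_of_fshift {ε : ℝ} {x v : Fin d → lpC p} {Lamj : ℕ → Set (Fin d → ℝ)}
    (hT : ∀ lam ∈ K, IsProductShift p d w (T lam) lam)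
    (hx : ∀ i n, N ≤ n → x i n = 0) (hu : ∀ i n, N ≤ n → u i n = 0)
    (huv : ∀ i n, u i n ^ (k + 1) = v i n)
    (hN : N < nseq 0) (hgap : ∀ j < q, nseq j + N < nseq (j + 1))
    (hcover : K ⊆ ⋃ j ∈ range (q + 1), Lamj j)
    (hy : ∀ j i n, y j i n = (fshift (w (lamj j i)) (k + 1))^[nseq j] (u i) n)
    (hsum : NormLE p d (fun i n => ∑ j ∈ range (q + 1),
      (fshift (w (lamj j i)) (k + 1))^[nseq j] (u i) n) ε)
    (herase : ∀ i ≤ q, ∀ lam ∈ Lamj i, ∀ m : ℕ, k + 1 ≤ m → m ≤ l + 1 →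
      NormLE p d (fun c n => ∑ j ∈ (range (q + 1)).erase i, (bshift (w (lam c)))^[nseq i]
        (fun t => ((fshift (w (lamj j c)) (k + 1))^[nseq j] (u c) t) ^ m) n) ε)
    (hhigh : ∀ i ≤ q, ∀ lam ∈ Lamj i, ∀ m : ℕ, k + 1 < m → m ≤ l + 1 →
      NormLE p d (fun c n => (bshift (w (lam c)))^[nseq i]
        (fun t => ((fshift (w (lamj i c)) (k + 1))^[nseq i] (u c) t) ^ m) n) ε)
    (hlow : ∀ i ≤ q, ∀ lam ∈ Lamj i,
      NormLE p d (fun c n => (bshift (w (lam c)))^[nseq i]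
        (fun t => ((fshift (w (lamj i c)) (k + 1))^[nseq i] (u c) t) ^ (k + 1)) n
          - (u c n) ^ (k + 1)) ε) :
    IsBlockFamily T K k l x v ε (range (q + 1)) y := by
  have hNj (j : ℕ) (hj : j ≤ q) : N < nseq j := lt_of_forall_add_lt_succ hN hgap hj
  have hxy (j : ℕ) (hj : j ∈ range (q + 1)) (c : Fin d) (n : ℕ) : x c n = 0 ∨ y j c n = 0 := by
    have := hNj j (mem_range_succ_iff.1 hj)
    refine (le_or_gt N n).imp (hx c n) fun hn => ?_
    rw [hy, fshift_iterate_eq_zero (hu c) (by omega)]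
  refine ⟨pairwise_mul_eq_zero_of_fshift hu hgap hy, fun j hj => lp_mul_eq_zero (hxy j hj),
    fun j hj => lp_mul_eq_zero fun c n => (hxy j hj c n).symm,
    hsum.norm_le fun c n => ?_, fun lam hlam => ?_⟩
  · simp only [Finset.sum_apply, lp.coeFn_sum, hy]
  obtain ⟨i, hi, hlami⟩ := Set.mem_iUnion₂.1 (hcover hlam)
  have hiq : i ≤ q := mem_range_succ_iff.1 hi
  have hTlam := hT lam hlam
  obtain ⟨n, hn⟩ := Nat.exists_eq_add_one_of_ne_zero (Nat.ne_zero_of_lt (hNj i hiq))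
  refine ⟨i, hi, n, ?_⟩
  rw [← hn]
  refine ⟨hTlam.pow_powSucc_eq_zero fun c t ht => hx c t ((hNj i hiq).le.trans ht),
    fun m hm => ?_, fun m hm => ?_, ?_⟩
  · rw [mem_Icc] at hm
    refine (herase i hiq lam hlami (m + 1) (by omega) (by omega)).norm_le fun c t => ?_
    simp only [Finset.sum_apply, lp.coeFn_sum, hTlam.pow_powSucc_apply, hy]
  · rw [mem_Ioc] at hm
    refine (hhigh i hiq lam hlami (m + 1) (by omega) (by omega)).norm_le fun c t => ?_
    simp only [hTlam.pow_powSucc_apply, hy]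
  · refine (hlow i hiq lam hlami).norm_le fun c t => ?_
    simp only [Pi.sub_apply, lp.coeFn_sub, hTlam.pow_powSucc_apply, hy, huv]

end Blocks

end LpAlgebra

/-- Theorem 2.1 of the paper: the Basic Criterion for common hypercyclic algebras, on
`ℓᵖ(ℕ)^d` with the coordinatewise product. -/
theorem stmt_18 (p : ℝ≥0∞) [Fact (1 ≤ p)] (hp : p ≠ ⊤) (d : ℕ) (hd : 1 ≤ d)
    (Λ : Set (Fin d → ℝ)) (hΛσ : IsSigmaCompact Λ)
    (w : ℝ → ℕ → ℝ)
    (hwpos : ∀ x : ℝ, ∀ n : ℕ, 1 ≤ n → 0 < w x n)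
    (hwbdd : ∀ x : ℝ, ∃ C : ℝ, ∀ n : ℕ, 1 ≤ n → w x n ≤ C)
    (hwcont : ∀ n : ℕ, Continuous fun x => w x n)
    (T : (Fin d → ℝ) → ((Fin d → lpC p) →L[ℂ] (Fin d → lpC p)))
    (hT : ∀ lam ∈ Λ, IsProductShift p d w (T lam) lam)
    (hTcont : ContinuousOn (fun q : (Fin d → ℝ) × (Fin d → lpC p) => T q.1 q.2)
      (Λ ×ˢ Set.univ))
    (hcrit : ∀ K ⊆ Λ, IsCompact K → ∀ m' m'' : ℕ, 1 ≤ m' → m' ≤ m'' →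
      ∀ u : Fin d → ℕ → ℂ, (∃ P : ℕ, ∀ (i : Fin d) (n : ℕ), P < n → u i n = 0) →
      ∀ N : ℕ, 0 < N → ∀ ε > (0 : ℝ),
      ∃ q : ℕ, ∃ lamj : ℕ → (Fin d → ℝ), ∃ Lamj : ℕ → Set (Fin d → ℝ), ∃ nseq : ℕ → ℕ,
        (∀ j ≤ q, lamj j ∈ Λ) ∧ (∀ j ≤ q, Lamj j ⊆ Λ) ∧
        (N < nseq 0) ∧ (∀ j < q, nseq j + N < nseq (j + 1)) ∧
        -- (I)
        (K ⊆ ⋃ j ∈ Finset.range (q + 1), Lamj j) ∧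
        -- (II), first condition
        NormLE p d (fun i n => ∑ j ∈ Finset.range (q + 1),
          (fshift (w (lamj j i)) m')^[nseq j] (u i) n) ε ∧
        -- (II), second condition
        (∀ i ≤ q, ∀ lam ∈ Lamj i, ∀ m : ℕ, m' ≤ m → m ≤ m'' →
          NormLE p d (fun c n => ∑ j ∈ (Finset.range (q + 1)).erase i,
            (bshift (w (lam c)))^[nseq i]
              (fun t => ((fshift (w (lamj j c)) m')^[nseq j] (u c) t) ^ m) n) ε) ∧
        -- (III)
        (∀ i ≤ q, ∀ lam ∈ Lamj i, ∀ m : ℕ, m' < m → m ≤ m'' →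
          NormLE p d (fun c n => (bshift (w (lam c)))^[nseq i]
            (fun t => ((fshift (w (lamj i c)) m')^[nseq i] (u c) t) ^ m) n) ε) ∧
        -- (IV)
        (∀ i ≤ q, ∀ lam ∈ Lamj i,
          NormLE p d (fun c n => (bshift (w (lam c)))^[nseq i]
            (fun t => ((fshift (w (lamj i c)) m')^[nseq i] (u c) t) ^ m') n
              - (u c n) ^ m') ε)) :
    CommonHypercyclicAlgebraCW p d Λ T := by
  refine commonHypercyclicAlgebraCW_of_isBlockFamily hp hd hΛσ hTcont
    (dense_setOf_eventually_eq_zero hp) fun K hKΛ hK k l hkl x hx v hv ε hε => ?_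
  obtain ⟨N, hN⟩ := Filter.eventually_atTop.1 (hx.and hv)
  choose root hroot using fun z : ℂ => IsAlgClosed.exists_pow_nat_eq z k.succ_pos
  have hu (i : Fin d) (n : ℕ) (hn : N + 1 ≤ n) : root (v i n) = 0 := by
    rw [← pow_eq_zero_iff k.succ_ne_zero, hroot, (hN n (by omega)).2 i]
  obtain ⟨q, lamj, Lamj, nseq, -, -, hN0, hgap, hcover, hsum, herase, hhigh, hlow⟩ :=
    hcrit K hKΛ hK (k + 1) (l + 1) (by omega) (by omega) (fun i n => root (v i n)) ⟨N, hu⟩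
      (N + 1) N.succ_pos ε hε
  let y (j : ℕ) (i : Fin d) : lpC p :=
    ⟨(fshift (w (lamj j i)) (k + 1))^[nseq j] _, memℓp_fshift_iterate (hu i)⟩
  exact ⟨_, y, isBlockFamily_of_fshift (fun lam hlam => hT lam (hKΛ hlam))
    (fun i n hn => (hN n (by omega)).1 i) hu (fun _ _ => hroot _) hN0 hgap hcover
    (fun _ _ _ => rfl) hsum herase hhigh hlow⟩
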